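/- For x > 0, the function Φ(x) = ∑_{n=1}^∞ n^{(n+2)/2} x^n / n! satisfies the enclosure √(e/π) · x · Ψ(x√(2e)) ≤ Φ(x) ≤ x · Ψ(x√(2e)), where Ψ(z) = 1 + (√π/2) z e^{z²/4} (1 + erf(z/2)). -/

import Mathlib

/-- The error function erf(z) = (2/√π) ∫₀^z e^{-t²} dt. -/
noncomputable def erf (z : ℝ) : ℝ := 2 / Real.sqrt Real.pi * ∫ t in (0:ℝ)..z, Real.exp (-t ^ 2)

/-- Ψ(z) = 1 + (√π/2) z e^{z²/4} (1 + erf(z/2)). -/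
noncomputable def Psi (z : ℝ) : ℝ :=
  1 + Real.sqrt Real.pi / 2 * z * Real.exp (z ^ 2 / 4) * (1 + erf (z / 2))

/-- Φ(x) = ∑_{n≥1} n^{(n+2)/2} x^n / n!. -/
noncomputable def Phi (x : ℝ) : ℝ :=
  ∑' n : ℕ, (n : ℝ) ^ (((n : ℝ) + 2) / 2) * x ^ n / (Nat.factorial n : ℝ)

open MeasureTheory Set Filter Topology Real in
/-- The antiderivative of `2 t e^{z t - t²}` through the Gaussian integral. -/
lemma hasDerivAt_gaussian_antideriv (z t : ℝ) :
    HasDerivAt (fun t => z * rexp (z ^ 2 / 4) * (∫ u in (0 : ℝ)..(t - z / 2), rexp (-u ^ 2))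
      - rexp (z * t - t ^ 2)) (2 * t * rexp (z * t - t ^ 2)) t := by
  have hc : Continuous fun u : ℝ => rexp (-u ^ 2) := by fun_prop
  have h1 : HasDerivAt (fun t => ∫ u in (0 : ℝ)..(t - z / 2), rexp (-u ^ 2))
      (rexp (-(t - z / 2) ^ 2)) t := by
    have h := (hc.integral_hasStrictDerivAt 0 (t - z / 2)).hasDerivAt
    simpa [Function.comp_def] using HasDerivAt.comp t h ((hasDerivAt_id t).sub_const (z / 2))
  have h2 : HasDerivAt (fun t => z * t - t ^ 2) (z - 2 * t) t := by
    simpa [Pi.sub_def] using ((hasDerivAt_id t).const_mul z).sub (hasDerivAt_pow 2 t)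
  refine ((h1.const_mul (z * rexp (z ^ 2 / 4))).sub h2.exp).congr_deriv ?_
  rw [mul_assoc, ← Real.exp_add,
    show z ^ 2 / 4 + -(t - z / 2) ^ 2 = z * t - t ^ 2 by ring]
  ring

open MeasureTheory Set Filter Topology Real in
lemma tendsto_gaussian_antideriv (z : ℝ) :
    Tendsto (fun t => z * rexp (z ^ 2 / 4) * (∫ u in (0 : ℝ)..(t - z / 2), rexp (-u ^ 2))
      - rexp (z * t - t ^ 2)) atTop (𝓝 (z * rexp (z ^ 2 / 4) * (√π / 2))) := by
  have hint : Integrable fun u : ℝ => rexp (-u ^ 2) := by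
    simpa using integrable_exp_neg_mul_sq one_pos
  have hval : ∫ u in Ioi (0 : ℝ), rexp (-u ^ 2) = √π / 2 := by
    simpa using integral_gaussian_Ioi 1
  have h1 : Tendsto (fun t => ∫ u in (0 : ℝ)..(t - z / 2), rexp (-u ^ 2)) atTop
      (𝓝 (√π / 2)) := by
    rw [← hval]
    exact intervalIntegral_tendsto_integral_Ioi 0 hint.integrableOn
      (tendsto_atTop_add_const_right _ _ tendsto_id)
  have h2 : Tendsto (fun t : ℝ => rexp (z * t - t ^ 2)) atTop (𝓝 0) := by
    refine Real.tendsto_exp_atBot.comp ?_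
    have h3 : Tendsto (fun t : ℝ => t * (z - t)) atTop atBot :=
      tendsto_id.atTop_mul_atBot₀ (tendsto_const_nhds.add_atBot tendsto_neg_atTop_atBot)
    refine h3.congr fun t => by ring
  simpa using (h1.const_mul (z * rexp (z ^ 2 / 4))).sub h2

lemma erf_neg (z : ℝ) : erf (-z) = -erf z := by
  have h := intervalIntegral.integral_comp_neg (a := 0) (b := z) fun t : ℝ => Real.exp (-t ^ 2)
  simp only [neg_sq, neg_zero] at h
  rw [erf, erf, h, intervalIntegral.integral_symm (-z) 0]
  ring

open MeasureTheory Set Filter Topology Real in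
lemma integrableOn_mul_exp_sub_sq (z : ℝ) :
    IntegrableOn (fun t => 2 * t * rexp (z * t - t ^ 2)) (Ioi 0) :=
  integrableOn_Ioi_deriv_of_nonneg' (fun t _ => hasDerivAt_gaussian_antideriv z t)
    (fun t ht => by have : 0 < t := ht; positivity) (tendsto_gaussian_antideriv z)

open MeasureTheory Set Filter Topology Real in
lemma integral_mul_exp_sub_sq (z : ℝ) :
    ∫ t in Ioi (0 : ℝ), 2 * t * rexp (z * t - t ^ 2) = Psi z := by
  rw [integral_Ioi_of_hasDerivAt_of_nonneg' (fun t _ => hasDerivAt_gaussian_antideriv z t)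
    (fun t ht => by have : 0 < t := ht; positivity) (tendsto_gaussian_antideriv z)]
  have h : √π / 2 * erf (-(z / 2)) = ∫ u in (0 : ℝ)..(0 - z / 2), rexp (-u ^ 2) := by
    rw [erf, zero_sub, ← mul_assoc, div_mul_div_comm, mul_comm √π, div_self (by positivity),
      one_mul]
  rw [← h, erf_neg, Psi]
  simp
  ring

open MeasureTheory Set Real in
lemma integral_pow_mul_exp_neg_sq (n : ℕ) :
    ∫ t in Ioi (0 : ℝ), t ^ (n + 1) * rexp (-t ^ 2) = Gamma ((n : ℝ) / 2 + 1) / 2 := by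
  have h := integral_rpow_mul_exp_neg_rpow (p := 2) (q := (n + 1 : ℕ)) two_pos
    (by push_cast; linarith [n.cast_nonneg (α := ℝ)])
  simp only [rpow_natCast, rpow_two] at h
  rw [h, show (((n + 1 : ℕ) : ℝ) + 1) / 2 = (n : ℝ) / 2 + 1 by push_cast; ring]
  ring

open MeasureTheory Set Real in
lemma hasSum_Psi {z : ℝ} (hz : 0 ≤ z) :
    HasSum (fun n : ℕ => Gamma ((n : ℝ) / 2 + 1) / n.factorial * z ^ n) (Psi z) := by
  let F : ℕ → ℝ → ℝ := fun n t => 2 * z ^ n / n.factorial * (t ^ (n + 1) * rexp (-t ^ 2))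
  have hF : ∀ t, HasSum (fun n => F n t) (2 * t * rexp (z * t - t ^ 2)) := fun t => by
    have h := (NormedSpace.expSeries_div_hasSum_exp (z * t)).mul_left (2 * t * rexp (-t ^ 2))
    rw [← Real.exp_eq_exp_ℝ, mul_assoc (2 * t), ← Real.exp_add,
      show -t ^ 2 + z * t = z * t - t ^ 2 by ring] at h
    refine h.congr_fun fun n => ?_
    simp only [F]
    ring
  have key := hasSum_integral_of_dominated_convergence (μ := volume.restrict (Ioi (0 : ℝ)))
    (F := F) F (fun n => by fun_prop)
    (fun n => (ae_restrict_mem measurableSet_Ioi).mono fun t ht => by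
      have : 0 < t := ht
      rw [Real.norm_of_nonneg (by positivity)])
    (.of_forall fun t => (hF t).summable)
    (by simpa only [(hF _).tsum_eq, IntegrableOn] using integrableOn_mul_exp_sub_sq z)
    (.of_forall hF)
  rw [integral_mul_exp_sub_sq] at key
  refine key.congr_fun fun n => ?_
  simp only [F]
  rw [integral_const_mul, integral_pow_mul_exp_neg_sq]
  ring

open Real in
lemma mul_log_sub_mul_log_le {s : ℝ} (hs : 0 < s) :
    (s + 1) * log (s + 1) - s * log s ≤ 1 + log (s + 1 / 2) := by
  have hm : 0 < s + 1 / 2 := by linarith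
  have hle : ∀ t ∈ Set.Icc s (s + 1), log t ≤ log (s + 1 / 2) + (t / (s + 1 / 2) - 1) := by
    intro t ht
    have ht0 : 0 < t := hs.trans_le ht.1
    have h := log_le_sub_one_of_pos (div_pos ht0 hm)
    rw [log_div ht0.ne' hm.ne'] at h
    linarith
  have h := intervalIntegral.integral_mono_on (by linarith) intervalIntegral.intervalIntegrable_log'
    (Continuous.intervalIntegrable (by fun_prop) _ _) hle
  have hr : ∫ t in s..(s + 1), (log (s + 1 / 2) + (t / (s + 1 / 2) - 1)) = log (s + 1 / 2) := by
    rw [intervalIntegral.integral_add (by simp)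
      (Continuous.intervalIntegrable (by fun_prop) _ _), intervalIntegral.integral_sub
      (Continuous.intervalIntegrable (by fun_prop) _ _) (by simp),
      intervalIntegral.integral_div, integral_id]
    simp
    field_simp
    ring
  rw [integral_log, hr] at h
  linarith

/-- The ratio of `Γ (s + 1 / 2)` to its Stirling-type approximation `(s / e) ^ s`. -/
noncomputable def gammaRatio (s : ℝ) : ℝ := Real.Gamma (s + 1 / 2) * Real.exp s / s ^ s

open Real in
lemma gammaRatio_le_add_one {s : ℝ} (hs : 0 < s) : gammaRatio s ≤ gammaRatio (s + 1) := by
  have hG : 0 < Gamma (s + 1 / 2) := Gamma_pos_of_pos (by linarith)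
  have hkey : (s + 1) ^ (s + 1) ≤ (s + 1 / 2) * exp 1 * s ^ s := by
    rw [← log_le_log_iff (by positivity) (by positivity), log_rpow (by positivity),
      log_mul (by positivity) (by positivity), log_mul (by positivity) (by positivity),
      log_rpow hs, log_exp]
    linarith [mul_log_sub_mul_log_le hs]
  rw [gammaRatio, gammaRatio, show s + 1 + 1 / 2 = (s + 1 / 2) + 1 by ring,
    Gamma_add_one (by linarith), exp_add, div_le_div_iff₀ (by positivity) (by positivity)]
  calc Gamma (s + 1 / 2) * exp s * (s + 1) ^ (s + 1)
      ≤ Gamma (s + 1 / 2) * exp s * ((s + 1 / 2) * exp 1 * s ^ s) := by gcongr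
    _ = _ := by ring

lemma monotone_gammaRatio_add_nat {s : ℝ} (hs : 0 < s) :
    Monotone fun k : ℕ => gammaRatio (s + k) :=
  monotone_nat_of_le_succ fun k => by
    simpa [add_assoc] using gammaRatio_le_add_one (s := s + k) (by positivity)

open Real in
lemma factorial_eq_stirlingSeq_mul {n : ℕ} (hn : n ≠ 0) :
    (n.factorial : ℝ) = Stirling.stirlingSeq n * (√(2 * n) * (n / exp 1) ^ n) := by
  rw [Stirling.stirlingSeq, div_mul_cancel₀]
  positivity

open Real in
lemma gammaRatio_natCast {n : ℕ} (hn : n ≠ 0) :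
    gammaRatio n = √π * √2 * (Stirling.stirlingSeq (2 * n) / Stirling.stirlingSeq n) := by
  have hn' : (0 : ℝ) < n := by positivity
  have hT : 0 < Stirling.stirlingSeq n := by
    unfold Stirling.stirlingSeq; positivity
  have hG := Gamma_mul_Gamma_add_half (n : ℝ)
  have h1 : (n : ℝ) * Gamma n = n.factorial := by
    rw [← Gamma_nat_eq_factorial, Gamma_add_one hn'.ne']
  have h2 : 2 * (n : ℝ) * Gamma (2 * n) = (2 * n).factorial := by
    rw [← Gamma_nat_eq_factorial]; push_cast; rw [Gamma_add_one (by positivity)]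
  have h3 : (2 : ℝ) ^ (1 - 2 * (n : ℝ)) = 2 / 4 ^ n := by
    rw [rpow_sub two_pos, rpow_one, rpow_mul (by norm_num)]; norm_num
  have h4 : (n.factorial : ℝ) * Gamma (n + 1 / 2) = (2 * n).factorial / 4 ^ n * √π := by
    rw [← h1, ← h2, mul_assoc, hG, h3]; ring
  rw [factorial_eq_stirlingSeq_mul hn, factorial_eq_stirlingSeq_mul (by positivity)] at h4
  have h5 : √(2 * ((2 * n : ℕ) : ℝ)) = √2 * √(2 * n) := by
    push_cast; rw [sqrt_mul (by norm_num)]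
  rw [h5] at h4
  push_cast at h4
  have h6 : (2 * (n : ℝ) / exp 1) ^ (2 * n) = 4 ^ n * ((n / exp 1) ^ n) ^ 2 := by
    rw [← pow_mul, mul_comm n 2, mul_div_assoc, mul_pow, pow_mul]; norm_num
  rw [h6] at h4
  have h7 : rexp n = exp 1 ^ n := by rw [← exp_nat_mul, mul_one]
  have h8 : 0 < √(2 * (n : ℝ)) := by positivity
  have h9 : 0 < ((n : ℝ) / exp 1) ^ n := by positivity
  have h10 : Stirling.stirlingSeq n * Gamma (n + 1 / 2) =
      √π * √2 * Stirling.stirlingSeq (2 * n) * (n / exp 1) ^ n := by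
    have h11 : (4 : ℝ) ^ n ≠ 0 := by positivity
    refine mul_right_cancel₀ (mul_pos h8 h9).ne' ?_
    field_simp at h4 ⊢
    linear_combination h4
  rw [gammaRatio, rpow_natCast, h7, mul_div_assoc', eq_div_iff hT.ne', div_mul_eq_mul_div,
    div_eq_iff (by positivity)]
  have h12 : exp 1 ^ n * (n / exp 1) ^ n = (n : ℝ) ^ n := by
    rw [← mul_pow, mul_div_cancel₀ _ (exp_pos 1).ne']
  linear_combination exp 1 ^ n * h10 + √π * √2 * Stirling.stirlingSeq (2 * n) * h12

open Real in
lemma gammaRatio_half_add_natCast {n : ℕ} (hn : n ≠ 0) :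
    gammaRatio (1 / 2 + n) = Stirling.stirlingSeq n * (√2 * exp (1 / 2)) /
      ((1 + 1 / 2 / n) ^ n * √(1 + 1 / 2 / n)) := by
  have hn' : (0 : ℝ) < n := by positivity
  have h7 : rexp n = exp 1 ^ n := by rw [← exp_nat_mul, mul_one]
  have h12 : exp 1 ^ n * (n / exp 1) ^ n = (n : ℝ) ^ n := by
    rw [← mul_pow, mul_div_cancel₀ _ (exp_pos 1).ne']
  have h1 : (1 / 2 + n : ℝ) ^ (1 / 2 + n : ℝ) =
      n ^ n * √n * ((1 + 1 / 2 / n) ^ n * √(1 + 1 / 2 / n)) := by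
    rw [rpow_add (by positivity), rpow_natCast, ← sqrt_eq_rpow,
      show (1 / 2 + n : ℝ) = n * (1 + 1 / 2 / n) by field_simp; ring, sqrt_mul hn'.le, mul_pow]
    ring
  rw [gammaRatio, h1, show (1 / 2 + n + 1 / 2 : ℝ) = n + 1 by ring, Gamma_nat_eq_factorial,
    factorial_eq_stirlingSeq_mul hn, exp_add, sqrt_mul (by norm_num), h7,
    div_eq_div_iff (by positivity) (by positivity)]
  linear_combination Stirling.stirlingSeq n * √2 * √n * exp (1 / 2) *
    ((1 + 1 / 2 / n) ^ n * √(1 + 1 / 2 / n)) * h12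

open Real Filter Topology in
lemma tendsto_gammaRatio_natCast :
    Tendsto (fun n : ℕ => gammaRatio n) atTop (𝓝 (√(2 * π))) := by
  have hT := Stirling.tendsto_stirlingSeq_sqrt_pi
  have hT2 : Tendsto (fun n : ℕ => Stirling.stirlingSeq (2 * n)) atTop (𝓝 √π) :=
    hT.comp (tendsto_id.const_mul_atTop' two_pos)
  have hpi : √π ≠ 0 := by positivity
  have h := (hT2.div hT hpi).const_mul (√π * √2)
  rw [div_self hpi, mul_one, ← sqrt_mul pi_pos.le, mul_comm π] at h
  refine h.congr' ?_
  filter_upwards [eventually_ne_atTop 0] with n hn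
  rw [gammaRatio_natCast hn, ← sqrt_mul pi_pos.le, mul_comm π]
  rfl

open Real Filter Topology in
lemma tendsto_gammaRatio_half_add_natCast :
    Tendsto (fun n : ℕ => gammaRatio (1 / 2 + n)) atTop (𝓝 (√(2 * π))) := by
  have h1 : Tendsto (fun n : ℕ => √(1 + 1 / 2 / (n : ℝ))) atTop (𝓝 1) := by
    have := ((tendsto_const_div_atTop_nhds_zero_nat (1 / 2 : ℝ)).const_add 1).sqrt
    simpa using this
  have h := (Stirling.tendsto_stirlingSeq_sqrt_pi.mul_const (√2 * exp (1 / 2))).div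
    ((Real.tendsto_one_add_div_pow_exp (1 / 2)).mul h1) (by positivity)
  rw [mul_one, ← mul_assoc, mul_div_cancel_right₀ _ (exp_pos _).ne',
    ← sqrt_mul pi_pos.le, mul_comm π] at h
  refine h.congr' ?_
  filter_upwards [eventually_ne_atTop 0] with n hn
  exact (gammaRatio_half_add_natCast hn).symm

open Real in
lemma sqrt_two_mul_exp_le_gammaRatio_half : √(2 * exp 1) ≤ gammaRatio (1 / 2) := by
  rw [gammaRatio, show (1 / 2 + 1 / 2 : ℝ) = 1 by norm_num, Gamma_one, one_mul, ← sqrt_eq_rpow,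
    le_div_iff₀ (by positivity), ← sqrt_mul (by positivity),
    show 2 * exp 1 * (1 / 2) = exp (1 / 2) ^ 2 by rw [← exp_nat_mul]; norm_num; ring]
  rw [sqrt_sq (exp_pos _).le]

open Real in
lemma sqrt_two_mul_exp_le_gammaRatio_one : √(2 * exp 1) ≤ gammaRatio 1 := by
  have hG : Gamma (1 + 1 / 2) = √π / 2 := by
    rw [add_comm, Gamma_add_one (by norm_num), Gamma_one_half_eq]; ring
  rw [gammaRatio, hG, one_rpow, div_one]
  refine sqrt_le_iff.2 ⟨by positivity, ?_⟩
  rw [mul_pow, div_pow, sq_sqrt pi_pos.le]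
  have h : 8 ≤ π * exp 1 := by nlinarith [pi_gt_d2, exp_one_gt_d9]
  nlinarith [exp_pos 1]

open Real in
/-- The ratio at a positive half-integer lies between `√(2e)` and `√(2π)`. -/
lemma gammaRatio_mem_Icc (n : ℕ) :
    gammaRatio (((n : ℝ) + 1) / 2) ∈ Set.Icc √(2 * exp 1) √(2 * π) := by
  obtain ⟨k, rfl | rfl⟩ := n.even_or_odd'
  · have hm := monotone_gammaRatio_add_nat (s := 1 / 2) (by norm_num)
    have h0 := hm (Nat.zero_le k)
    have h1 := hm.ge_of_tendsto tendsto_gammaRatio_half_add_natCast k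
    rw [show (((2 * k : ℕ) : ℝ) + 1) / 2 = 1 / 2 + k by push_cast; ring]
    exact ⟨sqrt_two_mul_exp_le_gammaRatio_half.trans (by simpa using h0), h1⟩
  · have hm := monotone_gammaRatio_add_nat one_pos
    have h0 := hm (Nat.zero_le k)
    have h1 := hm.ge_of_tendsto
      (((Filter.tendsto_add_atTop_iff_nat 1).2 tendsto_gammaRatio_natCast).congr
        fun n => by push_cast; rw [add_comm]) k
    rw [show (((2 * k + 1 : ℕ) : ℝ) + 1) / 2 = 1 + k by push_cast; ring]
    exact ⟨sqrt_two_mul_exp_le_gammaRatio_one.trans (by simpa using h0), h1⟩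

open Real in
lemma Gamma_mul_sqrt_pow (n : ℕ) :
    Gamma ((n : ℝ) / 2 + 1) * √(2 * exp 1) ^ n * √(2 * exp 1) =
      gammaRatio (((n : ℝ) + 1) / 2) * ((n : ℝ) + 1) ^ (((n : ℝ) + 1) / 2) := by
  have h1 : √(2 * exp 1) ^ n * √(2 * exp 1) =
      2 ^ (((n : ℝ) + 1) / 2) * exp (((n : ℝ) + 1) / 2) := by
    rw [← pow_succ, sqrt_eq_rpow, ← rpow_mul_natCast (by positivity),
      mul_rpow (by norm_num) (exp_pos 1).le, ← exp_mul]
    push_cast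
    ring_nf
  have h2 : ((n : ℝ) + 1) ^ (((n : ℝ) + 1) / 2) =
      2 ^ (((n : ℝ) + 1) / 2) * (((n : ℝ) + 1) / 2) ^ (((n : ℝ) + 1) / 2) := by
    rw [← mul_rpow (by norm_num) (by positivity), mul_div_cancel₀ _ two_ne_zero]
  rw [mul_assoc, h1, h2, gammaRatio, show ((n : ℝ) + 1) / 2 + 1 / 2 = (n : ℝ) / 2 + 1 by ring]
  have h3 : (((n : ℝ) + 1) / 2) ^ (((n : ℝ) + 1) / 2) ≠ 0 := by positivity
  field_simp

open Real in
lemma rpow_le_Gamma_mul (n : ℕ) :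
    ((n : ℝ) + 1) ^ (((n : ℝ) + 1) / 2) ≤ Gamma ((n : ℝ) / 2 + 1) * √(2 * exp 1) ^ n := by
  have h0 : 0 < √(2 * exp 1) := by positivity
  refine le_of_mul_le_mul_right ?_ h0
  rw [Gamma_mul_sqrt_pow, mul_comm]
  gcongr
  exact (gammaRatio_mem_Icc n).1

open Real in
lemma mul_Gamma_le_rpow (n : ℕ) :
    √(exp 1 / π) * (Gamma ((n : ℝ) / 2 + 1) * √(2 * exp 1) ^ n) ≤
      ((n : ℝ) + 1) ^ (((n : ℝ) + 1) / 2) := by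
  have h0 : 0 < √(2 * exp 1) := by positivity
  have h1 : √(exp 1 / π) * √(2 * π) = √(2 * exp 1) := by
    rw [← sqrt_mul (by positivity)]
    congr 1
    field_simp
  refine le_of_mul_le_mul_right ?_ h0
  rw [mul_assoc, Gamma_mul_sqrt_pow, mul_comm _ √(2 * exp 1), ← h1, mul_assoc]
  gcongr
  exact (gammaRatio_mem_Icc n).2

/-- For x > 0, the enclosure √(e/π)·x·Ψ(x√(2e)) ≤ Φ(x) ≤ x·Ψ(x√(2e)). -/
theorem stmt2 (x : ℝ) (hx : 0 < x) :
    Real.sqrt (Real.exp 1 / Real.pi) * x * Psi (x * Real.sqrt (2 * Real.exp 1)) ≤ Phi x ∧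
      Phi x ≤ x * Psi (x * Real.sqrt (2 * Real.exp 1)) := by
  let a : ℕ → ℝ := fun n => (n : ℝ) ^ (((n : ℝ) + 2) / 2) * x ^ n / (n.factorial : ℝ)
  have ha : ∀ n : ℕ, a (n + 1) =
      ((n : ℝ) + 1) ^ (((n : ℝ) + 1) / 2) * (x ^ (n + 1) / n.factorial) := fun n => by
    have h : (((n + 1 : ℕ) : ℝ) + 2) / 2 = ((n : ℝ) + 1) / 2 + 1 := by push_cast; ring
    simp only [a]
    rw [h, Nat.factorial_succ]
    push_cast
    rw [Real.rpow_add_one (by positivity)]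
    field_simp
  have hub : HasSum (fun n : ℕ => Real.Gamma ((n : ℝ) / 2 + 1) * Real.sqrt (2 * Real.exp 1) ^ n *
      (x ^ (n + 1) / n.factorial)) (x * Psi (x * Real.sqrt (2 * Real.exp 1))) :=
    ((hasSum_Psi (by positivity)).mul_left x).congr_fun fun n => by ring
  have hle : ∀ n : ℕ, a (n + 1) ≤ Real.Gamma ((n : ℝ) / 2 + 1) *
      Real.sqrt (2 * Real.exp 1) ^ n * (x ^ (n + 1) / n.factorial) := fun n => by
    rw [ha]
    gcongr
    exact rpow_le_Gamma_mul n
  have hs : Summable fun n => a (n + 1) :=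
    hub.summable.of_nonneg_of_le (fun n => by rw [ha]; positivity) hle
  have hPhi : HasSum (fun n => a (n + 1)) (Phi x) := by
    have h : Phi x = ∑' n, a (n + 1) := by
      rw [Phi, ((summable_nat_add_iff 1).1 hs).tsum_eq_zero_add]
      simp [a]
    exact h ▸ hs.hasSum
  refine ⟨?_, hasSum_le hle hPhi hub⟩
  rw [mul_assoc]
  refine hasSum_le (fun n => ?_) (hub.mul_left _) hPhi
  rw [ha, ← mul_assoc]
  gcongr
  exact mul_Gamma_le_rpow n
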